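/- Let m₁, m₂, m₃, m₄ ∈ ℝ with m₁ ≠ 0. Let P₊ = blockdiag(P₀, P₀) and P₋ = (1/2)·P₊ (4×4 matrices), and let ℒ be the 4×4 real matrix with rows (m₁, m₂, 0, 0), (0, 2/m₁, 0, m₃), (−m₁m₃, −m₂m₃, 2, m₄), (0, 0, 0, 1). Then ℒ is invertible and ℒᵀ P₋ ℒ = P₊; equivalently, ℒ is bijective and ⟨P₋ℒx, ℒy⟩ = ⟨P₊x, y⟩ for all x, y ∈ ℂ⁴ (a (𝒥₊,𝒥₋)-unitary operator). -/

import Mathlib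

open Matrix

/-- The standard Hermitian inner product on `ℂ^n`, conjugate-linear in the
second argument. -/
noncomputable def herm {n : Type*} [Fintype n] (x y : n → ℂ) : ℂ :=
  ∑ i, x i * (starRingEnd ℂ) (y i)

/-- `P₊ = blockdiag(P₀, P₀)` with `P₀ = !![0,1;−1,0]`, as a 4×4 matrix over `ℂ`. -/
def Pplus4 : Matrix (Fin 4) (Fin 4) ℂ :=
  !![0, 1, 0, 0; -1, 0, 0, 0; 0, 0, 0, 1; 0, 0, -1, 0]

/-!
For a `2 × 2` matrix, `Aᵀ P₀ = P₀ adj A`. Hence for a matrix `M` with `2 × 2` blocks `A, B, C, D`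
and `P = blockdiag(P₀, P₀)`, `Mᵀ P M = P N`, where `N` has diagonal blocks `det A + det C` and
`det B + det D` and off-diagonal blocks `adj A * B + adj C * D` and its adjugate. For `ℒ` both
determinant sums are `2` and the off-diagonal blocks vanish, so `ℒᵀ P₊ ℒ = 2 P₊`. Since `P₊` is
invertible, so is `ℒ`; and since `ℒ` is real, `ℒᵀ` is its adjoint.
-/

section Herm

variable {m n : Type*} [Fintype m] [Fintype n]

theorem herm_eq_dotProduct_star (x y : n → ℂ) : herm x y = x ⬝ᵥ star y :=
  rfl

theorem herm_mulVec_right (A : Matrix m n ℂ) (x : m → ℂ) (y : n → ℂ) :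
    herm x (A *ᵥ y) = herm (Aᴴ *ᵥ x) y := by
  rw [herm_eq_dotProduct_star, herm_eq_dotProduct_star, star_mulVec, dotProduct_comm,
    ← dotProduct_mulVec, dotProduct_comm]

theorem herm_mulVec_mulVec_mulVec (P : Matrix m m ℂ) (A : Matrix m n ℂ) (x y : n → ℂ) :
    herm (P *ᵥ (A *ᵥ x)) (A *ᵥ y) = herm ((Aᴴ * P * A) *ᵥ x) y := by
  rw [herm_mulVec_right, mulVec_mulVec, mulVec_mulVec, Matrix.mul_assoc]

end Herm

section SymplecticBlocks

variable {R : Type*} [CommRing R]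

/-- The matrix `P₀` of the standard symplectic form on the plane. -/
def planeSymplectic (R : Type*) [CommRing R] : Matrix (Fin 2) (Fin 2) R :=
  !![0, 1; -1, 0]

/-- The block matrix `blockdiag(P₀, P₀)` over an arbitrary ring. It is indexed by `Fin 2 ⊕ Fin 2`,
so that the block calculus of `Matrix.fromBlocks` applies; `Pplus4_eq_reindex` identifies it
with `P₊`. -/
def blockSymplectic (R : Type*) [CommRing R] : Matrix (Fin 2 ⊕ Fin 2) (Fin 2 ⊕ Fin 2) R :=
  fromBlocks (planeSymplectic R) 0 0 (planeSymplectic R)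

theorem transpose_mul_planeSymplectic (A : Matrix (Fin 2) (Fin 2) R) :
    Aᵀ * planeSymplectic R = planeSymplectic R * A.adjugate := by
  ext i j
  fin_cases i <;> fin_cases j <;>
    simp [planeSymplectic, adjugate_fin_two, mul_apply, Fin.sum_univ_two]

theorem adjugate_add_fin_two (A B : Matrix (Fin 2) (Fin 2) R) :
    (A + B).adjugate = A.adjugate + B.adjugate := by
  ext i j
  fin_cases i <;> fin_cases j <;> simp [adjugate_fin_two, add_comm]

theorem adjugate_adjugate_mul_fin_two (A B : Matrix (Fin 2) (Fin 2) R) :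
    (A.adjugate * B).adjugate = B.adjugate * A := by
  rw [adjugate_mul_distrib, adjugate_adjugate A (by simp), Fintype.card_fin, Nat.sub_self,
    pow_zero, one_smul]

theorem fromBlocks_transpose_mul_blockSymplectic (A B C D : Matrix (Fin 2) (Fin 2) R) :
    (fromBlocks A B C D)ᵀ * blockSymplectic R =
      blockSymplectic R * fromBlocks A.adjugate C.adjugate B.adjugate D.adjugate := by
  simp only [blockSymplectic, fromBlocks_transpose, fromBlocks_multiply,
    transpose_mul_planeSymplectic, Matrix.mul_zero, Matrix.zero_mul, add_zero, zero_add]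

theorem fromBlocks_transpose_mul_blockSymplectic_mul {A B C D : Matrix (Fin 2) (Fin 2) R} {μ : R}
    (hleft : A.det + C.det = μ) (hright : B.det + D.det = μ)
    (hcross : A.adjugate * B + C.adjugate * D = 0) :
    (fromBlocks A B C D)ᵀ * blockSymplectic R * fromBlocks A B C D = μ • blockSymplectic R := by
  have hcross' : B.adjugate * A + D.adjugate * C = 0 := by
    rw [← adjugate_adjugate_mul_fin_two A B, ← adjugate_adjugate_mul_fin_two C D,
      ← adjugate_add_fin_two, hcross, adjugate_zero]
  have hscalar : fromBlocks A.adjugate C.adjugate B.adjugate D.adjugate * fromBlocks A B C D =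
      μ • 1 := by
    rw [fromBlocks_multiply, hcross, hcross']
    simp only [adjugate_mul, ← add_smul, hleft, hright, ← fromBlocks_one, fromBlocks_smul,
      smul_zero]
  rw [fromBlocks_transpose_mul_blockSymplectic, Matrix.mul_assoc, hscalar, Matrix.mul_smul,
    Matrix.mul_one]

end SymplecticBlocks

section Tadpole

/-- The matrix `ℒ` of the tadpole vertex conditions with parameters
`(m₁, m₂, m₃, m₄) = (a, b, c, d)`, over an arbitrary field and in `2 × 2` blocks. -/
def tadpoleBlocks {K : Type*} [Field K] (a b c d : K) :
    Matrix (Fin 2 ⊕ Fin 2) (Fin 2 ⊕ Fin 2) K :=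
  fromBlocks !![a, b; 0, 2 / a] !![0, 0; 0, c] !![-a * c, -b * c; 0, 0] !![2, d; 0, 1]

theorem tadpoleBlocks_transpose_mul_blockSymplectic_mul {K : Type*} [Field K] {a : K} (ha : a ≠ 0)
    (b c d : K) :
    (tadpoleBlocks a b c d)ᵀ * blockSymplectic K * tadpoleBlocks a b c d =
      (2 : K) • blockSymplectic K := by
  refine fromBlocks_transpose_mul_blockSymplectic_mul ?_ ?_ ?_
  · simp [det_fin_two_of, mul_div_cancel₀ _ ha]
  · simp [det_fin_two_of]
  · simpa [adjugate_fin_two_of] using (eta_fin_two (0 : Matrix (Fin 2) (Fin 2) K)).symm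

theorem Pplus4_eq_reindex :
    Pplus4 = reindex finSumFinEquiv finSumFinEquiv (blockSymplectic ℂ) := by
  ext i j
  fin_cases i <;> fin_cases j <;> rfl

theorem isUnit_Pplus4 : IsUnit Pplus4 := by
  refine IsUnit.of_mul_eq_one (-Pplus4) ?_
  ext i j
  fin_cases i <;> fin_cases j <;> simp [Pplus4, mul_apply, Fin.sum_univ_four]

theorem reindex_tadpoleBlocks {K : Type*} [Field K] (a b c d : K) :
    reindex finSumFinEquiv finSumFinEquiv (tadpoleBlocks a b c d) =
      !![a, b, 0, 0; 0, 2 / a, 0, c; -a * c, -b * c, 2, d; 0, 0, 0, 1] := by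
  ext i j
  fin_cases i <;> fin_cases j <;> rfl

theorem reindex_tadpoleBlocks_transpose_mul_Pplus4_mul {a : ℂ} (ha : a ≠ 0) (b c d : ℂ) :
    (reindex finSumFinEquiv finSumFinEquiv (tadpoleBlocks a b c d))ᵀ * Pplus4 *
      reindex finSumFinEquiv finSumFinEquiv (tadpoleBlocks a b c d) = (2 : ℂ) • Pplus4 := by
  simp only [Pplus4_eq_reindex, reindex_apply, transpose_submatrix, submatrix_mul_equiv,
    tadpoleBlocks_transpose_mul_blockSymplectic_mul ha, submatrix_smul, Pi.smul_apply]

theorem tadpoleBlocks_ofReal_conjTranspose (a b c d : ℝ) :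
    (tadpoleBlocks (a : ℂ) b c d)ᴴ = (tadpoleBlocks (a : ℂ) b c d)ᵀ := by
  have hreal : tadpoleBlocks (a : ℂ) b c d = (tadpoleBlocks a b c d).map Complex.ofReal := by
    ext (i | i) (j | j) <;> fin_cases i <;> fin_cases j <;> simp [tadpoleBlocks]
  ext i j
  simp only [hreal, conjTranspose_apply, transpose_apply, map_apply]
  exact Complex.conj_ofReal _

end Tadpole

/-- Example 5.10 (δ'-type interactions for the Schrödinger operator on a tadpole graph):
the matrix `ℒ` is invertible and `(𝒥₊,𝒥₋)`-unitary, where `𝒥₊, 𝒥₋` carry the forms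
`⟨P₊·,·⟩` and `⟨P₋·,·⟩` with `P₋ = (1/2)P₊`. -/
theorem deltaprime_tadpole_unitary (m1 m2 m3 m4 : ℝ) (hm1 : m1 ≠ 0)
    (Pp Pm ℒ : Matrix (Fin 4) (Fin 4) ℂ)
    (hPp : Pp = Pplus4)
    (hPm : Pm = (1 / 2 : ℂ) • Pplus4)
    (hℒ : ℒ = !![(m1 : ℂ), (m2 : ℂ), 0, 0;
                 0, 2 / (m1 : ℂ), 0, (m3 : ℂ);
                 -(m1 : ℂ) * (m3 : ℂ), -(m2 : ℂ) * (m3 : ℂ), 2, (m4 : ℂ);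
                 0, 0, 0, 1]) :
    IsUnit ℒ ∧ ℒᵀ * Pm * ℒ = Pp ∧
      Function.Bijective ℒ.mulVec ∧
      ∀ x y : Fin 4 → ℂ,
        herm (Pm.mulVec (ℒ.mulVec x)) (ℒ.mulVec y) = herm (Pp.mulVec x) y := by
  have hm1' : (m1 : ℂ) ≠ 0 := Complex.ofReal_ne_zero.mpr hm1
  rw [← reindex_tadpoleBlocks] at hℒ
  have hform : ℒᵀ * Pm * ℒ = Pp := by
    rw [hPm, Matrix.mul_smul, Matrix.smul_mul, hℒ,
      reindex_tadpoleBlocks_transpose_mul_Pplus4_mul hm1', smul_smul, hPp]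
    norm_num
  have hadjoint : ℒᴴ = ℒᵀ := by
    rw [hℒ, conjTranspose_reindex, tadpoleBlocks_ofReal_conjTranspose, transpose_reindex]
  have hunit : IsUnit ℒ :=
    isUnit_of_mul_isUnit_right (x := ℒᵀ * Pm) (by rw [hform, hPp]; exact isUnit_Pplus4)
  refine ⟨hunit, hform, ⟨mulVec_injective_iff_isUnit.mpr hunit,
    mulVec_surjective_iff_isUnit.mpr hunit⟩, fun x y => ?_⟩
  rw [herm_mulVec_mulVec_mulVec, hadjoint, hform]
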